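/- Let X be a set, let n, c ≥ 1, let (x_1,y_1),…,(x_n,y_n) ∈ X × {1,…,c}, and let H be a nonempty countable set of functions h = (h_1,…,h_c) : X → ℝ^c. Assume that the two suprema below are integrable with respect to the relevant Gaussian product measures. Then E[sup_{h∈H} Σ_{i=1}^n g_i · h_{y_i}(x_i)] ≤ E[sup_{h∈H} Σ_{i=1}^n Σ_{j=1}^c g_{ij} · h_j(x_i)], where on the left g_1,…,g_n are i.i.d. standard Gaussian N(0,1) random variables and on the right g_{ij} (i = 1,…,n, j = 1,…,c) are i.i.d. standard Gaussian N(0,1) random variables. In particular, the empirical Gaussian complexity 𝔊_S(H) = E[sup_{h∈H} (1/n) Σ_{i=1}^n g_i h_{y_i}(x_i)] is bounded by (1/n) E[sup_{h∈H} Σ_{i=1}^n Σ_{j=1}^c g_{ij} h_j(x_i)]. -/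

import Mathlib

open MeasureTheory ProbabilityTheory

/-!
The supremum `F g = ⨆ h, ∑ i, ∑ j, g (i, j) * h (x i) j` is a convex function of the noise `g`,
and killing all noise coordinates but the `(i, y i)` turns it into the supremum on the left-hand
side. This truncation is the midpoint of `g` and of the vector obtained from `g` by changing the
sign of the other coordinates, a sign change that leaves a product of symmetric laws invariant.
Convexity therefore bounds the mean of `F` at the truncated noise by the mean of `F`.
-/

section Convex

theorem convexOn_iSup {𝕜 E β T : Type*} [Nonempty T] [Semiring 𝕜] [PartialOrder 𝕜]
    [AddCommMonoid E] [SMul 𝕜 E] [AddCommMonoid β] [ConditionallyCompleteLattice β]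
    [IsOrderedAddMonoid β] [SMul 𝕜 β] [PosSMulMono 𝕜 β] {s : Set E} {f : T → E → β}
    (hf : ∀ t, ConvexOn 𝕜 s (f t)) (hbdd : ∀ v ∈ s, BddAbove (Set.range fun t => f t v)) :
    ConvexOn 𝕜 s fun v => ⨆ t, f t v := by
  refine ⟨(hf (Classical.arbitrary T)).1, fun v hv w hw a b ha hb hab => ciSup_le fun t => ?_⟩
  calc f t (a • v + b • w) ≤ a • f t v + b • f t w := (hf t).2 hv hw ha hb hab
    _ ≤ a • (⨆ t, f t v) + b • ⨆ t, f t w := by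
      gcongr
      exacts [le_ciSup (hbdd v hv) t, le_ciSup (hbdd w hw) t]

theorem convexOn_iSup_dotProduct {T κ : Type*} [Nonempty T] [Fintype κ] {a : T → κ → ℝ}
    (hbdd : ∀ g : κ → ℝ, BddAbove (Set.range fun t => g ⬝ᵥ a t)) :
    ConvexOn ℝ Set.univ fun g : κ → ℝ => ⨆ t, g ⬝ᵥ a t :=
  convexOn_iSup (fun t => ((dotProductBilin ℝ ℝ).flip (a t)).convexOn convex_univ)
    fun g _ => hbdd g

theorem map_midpoint_le_of_convexOn {𝕜 E β : Type*} [Field 𝕜] [LinearOrder 𝕜]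
    [IsStrictOrderedRing 𝕜] [AddCommGroup E] [Module 𝕜 E] [AddCommGroup β] [PartialOrder β]
    [Module 𝕜 β] {s : Set E} {F : E → β} (hF : ConvexOn 𝕜 s F) {v w : E} (hv : v ∈ s)
    (hw : w ∈ s) : F (midpoint 𝕜 v w) ≤ midpoint 𝕜 (F v) (F w) := by
  have hhalf : (0 : 𝕜) ≤ ⅟2 := invOf_nonneg.2 zero_le_two
  simpa only [midpoint_eq_smul_add, smul_add] using
    hF.2 hv hw hhalf hhalf invOf_two_add_invOf_two

end Convex

section MeasurePreserving

theorem integral_comp_of_measurePreserving {α β G : Type*} [MeasurableSpace α]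
    [MeasurableSpace β] [NormedAddCommGroup G] [NormedSpace ℝ G] {μ : Measure α} {ν : Measure β}
    {φ : α → β} (hφ : MeasurePreserving φ μ ν) {f : β → G} (hf : AEStronglyMeasurable f ν) :
    ∫ u, f (φ u) ∂μ = ∫ v, f v ∂ν := by
  rw [← integral_map hφ.aemeasurable (hφ.map_eq.symm ▸ hf), hφ.map_eq]

theorem integral_midpoint_le_of_convexOn {E : Type*} [AddCommGroup E] [Module ℝ E]
    [MeasurableSpace E] {μ : Measure E} {S : E → E} (hS : MeasurePreserving S μ μ) {F : E → ℝ}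
    (hF : ConvexOn ℝ Set.univ F) (hint : Integrable F μ)
    (hint_mid : Integrable (fun v => F (midpoint ℝ v (S v))) μ) :
    ∫ v, F (midpoint ℝ v (S v)) ∂μ ≤ ∫ v, F v ∂μ := by
  have hint_S : Integrable (fun v => F (S v)) μ := hS.integrable_comp_of_integrable hint
  calc ∫ v, F (midpoint ℝ v (S v)) ∂μ
      ≤ ∫ v, ⅟(2 : ℝ) • (F v + F (S v)) ∂μ :=
        integral_mono hint_mid ((hint.add hint_S).smul ⅟(2 : ℝ)) fun v =>
          (map_midpoint_le_of_convexOn hF (Set.mem_univ v) (Set.mem_univ (S v))).trans_eq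
            (midpoint_eq_smul_add ..)
    _ = midpoint ℝ (∫ v, F v ∂μ) (∫ v, F (S v) ∂μ) := by
        rw [integral_smul, integral_add hint hint_S, midpoint_eq_smul_add]
    _ = ∫ v, F v ∂μ := by
        rw [integral_comp_of_measurePreserving hS hint.aestronglyMeasurable, midpoint_self]

end MeasurePreserving

section Coordinates

variable {ι κ : Type*}

theorem indicator_eq_midpoint_piecewise_neg (R : Type*) {E : Type*} [Ring R] [Invertible (2 : R)]
    [AddCommGroup E] [Module R E] (s : Set κ) [DecidablePred (· ∈ s)] (g : κ → E) :
    s.indicator g = midpoint R g (s.piecewise g (-g)) := by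
  ext k
  by_cases hk : k ∈ s <;> simp [hk]

theorem indicator_range_dotProduct {R : Type*} [NonUnitalNonAssocSemiring R] [Fintype ι]
    [Fintype κ] {e : ι → κ} (he : e.Injective) (g a : κ → R) :
    (Set.range e).indicator g ⬝ᵥ a = (g ∘ e) ⬝ᵥ (a ∘ e) := by
  refine (Fintype.sum_of_injective e he _ _ (fun k hk => ?_) fun i => ?_).symm
  · simp [hk]
  · simp

variable [Fintype κ]

theorem measurePreserving_piecewise_neg {E : κ → Type*} [∀ k, Neg (E k)]
    [∀ k, MeasurableSpace (E k)] [∀ k, MeasurableNeg (E k)] (μ : ∀ k, Measure (E k))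
    [∀ k, SigmaFinite (μ k)] [∀ k, (μ k).IsNegInvariant] (s : Set κ) [DecidablePred (· ∈ s)] :
    MeasurePreserving (fun g : ∀ k, E k => s.piecewise g (-g)) (Measure.pi μ) (Measure.pi μ) := by
  have hcoord (k : κ) :
      MeasurePreserving (fun u : E k => if k ∈ s then u else -u) (μ k) (μ k) := by
    split_ifs
    exacts [.id _, Measure.measurePreserving_neg _]
  exact measurePreserving_pi μ μ hcoord

theorem measurePreserving_pi_comp_injective [Fintype ι] {α : κ → Type*}
    [∀ k, MeasurableSpace (α k)] (μ : ∀ k, Measure (α k)) [∀ k, IsProbabilityMeasure (μ k)]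
    {e : ι → κ} (he : e.Injective) :
    MeasurePreserving (fun (g : ∀ k, α k) i => g (e i)) (Measure.pi μ)
      (Measure.pi fun i => μ (e i)) := by
  refine ⟨by fun_prop, ?_⟩
  have hindep : iIndepFun (fun i (g : ∀ k, α k) => g (e i)) (Measure.pi μ) :=
    (iIndepFun_pi (X := fun _ u => u) fun _ => aemeasurable_id).precomp he
  rw [hindep.map_fun_eq_pi_map fun i => (measurable_pi_apply (e i)).aemeasurable]
  simp only [(measurePreserving_eval μ _).map_eq]

end Coordinates

theorem integral_indicator_le_of_convexOn {κ E : Type*} [Fintype κ] [AddCommGroup E] [Module ℝ E]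
    [MeasurableSpace E] [MeasurableNeg E] {μ : κ → Measure E} [∀ k, SigmaFinite (μ k)]
    [∀ k, (μ k).IsNegInvariant] {F : (κ → E) → ℝ} (hF : ConvexOn ℝ Set.univ F)
    (hint : Integrable F (Measure.pi μ)) {s : Set κ}
    (hind : Integrable (fun g => F (s.indicator g)) (Measure.pi μ)) :
    ∫ g, F (s.indicator g) ∂Measure.pi μ ≤ ∫ g, F g ∂Measure.pi μ := by
  classical
  simp only [indicator_eq_midpoint_piecewise_neg ℝ] at hind ⊢
  exact integral_midpoint_le_of_convexOn (measurePreserving_piecewise_neg μ s) hF hint hind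

theorem integral_iSup_dotProduct_comp_le {T ι κ : Type*} [Nonempty T] [Fintype ι] [Fintype κ]
    {μ : κ → Measure ℝ} [∀ k, IsProbabilityMeasure (μ k)] [∀ k, (μ k).IsNegInvariant]
    {e : ι → κ} (he : e.Injective) {a : T → κ → ℝ}
    (hbdd : ∀ g : κ → ℝ, BddAbove (Set.range fun t => g ⬝ᵥ a t))
    (hint_comp : Integrable (fun g : ι → ℝ => ⨆ t, g ⬝ᵥ (a t ∘ e)) (Measure.pi fun i => μ (e i)))
    (hint : Integrable (fun g : κ → ℝ => ⨆ t, g ⬝ᵥ a t) (Measure.pi μ)) :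
    ∫ g, ⨆ t, g ⬝ᵥ (a t ∘ e) ∂(Measure.pi fun i => μ (e i)) ≤
      ∫ g, ⨆ t, g ⬝ᵥ a t ∂Measure.pi μ := by
  have hproj := measurePreserving_pi_comp_injective μ he
  have hind : Integrable (fun g => ⨆ t, (Set.range e).indicator g ⬝ᵥ a t) (Measure.pi μ) := by
    simp only [indicator_range_dotProduct he]
    exact hproj.integrable_comp_of_integrable hint_comp
  calc ∫ g, ⨆ t, g ⬝ᵥ (a t ∘ e) ∂(Measure.pi fun i => μ (e i))
      = ∫ g, ⨆ t, (g ∘ e) ⬝ᵥ (a t ∘ e) ∂Measure.pi μ :=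
        (integral_comp_of_measurePreserving hproj hint_comp.aestronglyMeasurable).symm
    _ = ∫ g, ⨆ t, (Set.range e).indicator g ⬝ᵥ a t ∂Measure.pi μ := by
        simp only [indicator_range_dotProduct he]
    _ ≤ ∫ g, ⨆ t, g ⬝ᵥ a t ∂Measure.pi μ :=
        integral_indicator_le_of_convexOn (convexOn_iSup_dotProduct hbdd) hint hind

instance isNegInvariant_gaussianReal_zero (v : NNReal) : (gaussianReal 0 v).IsNegInvariant :=
  ⟨gaussianReal_map_neg.trans (by rw [neg_zero])⟩

theorem gaussian_complexity_multiclass_le_general {X ι κ : Type*} [Fintype ι] [Fintype κ]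
    {ρ : ι × κ → Measure ℝ} [∀ p, IsProbabilityMeasure (ρ p)] [∀ p, (ρ p).IsNegInvariant]
    (x : ι → X) (y : ι → κ) {H : Set (X → κ → ℝ)} (hHne : H.Nonempty)
    (hbdd : ∀ g : ι × κ → ℝ,
      BddAbove (Set.range fun h : H => ∑ i, ∑ j, g (i, j) * (h : X → κ → ℝ) (x i) j))
    (hint₁ : Integrable (fun g : ι → ℝ => ⨆ h : H, ∑ i, g i * (h : X → κ → ℝ) (x i) (y i))
      (Measure.pi fun i => ρ (i, y i)))
    (hint₂ : Integrable
      (fun g : ι × κ → ℝ => ⨆ h : H, ∑ i, ∑ j, g (i, j) * (h : X → κ → ℝ) (x i) j)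
      (Measure.pi ρ))
    {r : ℝ} (hr : 0 ≤ r) :
    ∫ g, (⨆ h : H, r * ∑ i, g i * (h : X → κ → ℝ) (x i) (y i))
        ∂(Measure.pi fun i => ρ (i, y i)) ≤
      r * ∫ g, (⨆ h : H, ∑ i, ∑ j, g (i, j) * (h : X → κ → ℝ) (x i) j) ∂(Measure.pi ρ) := by
  have : Nonempty H := hHne.to_subtype
  have hgraph : Function.Injective fun i => (i, y i) := fun _ _ h => congrArg Prod.fst h
  simp only [← Fintype.sum_prod_type', ← Real.mul_iSup_of_nonneg hr, integral_const_mul]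
    at hbdd hint₂ ⊢
  gcongr
  exact integral_iSup_dotProduct_comp_le hgraph
    (a := fun (h : H) p => (h : X → κ → ℝ) (x p.1) p.2) hbdd hint₁ hint₂

/-- **Gaussian complexity of multi-class hypothesis spaces** (Lemma A.2): the Gaussian
complexity of a multi-class hypothesis class (seen as functions on `X × {1,…,c}` evaluated
at a sample `(x_i, y_i)`) is bounded by the Gaussian complexity where every component gets
its own independent Gaussian variable. -/
theorem gaussian_complexity_multiclass_le {X : Type*} (n c : ℕ) (hn : 1 ≤ n) (hc : 1 ≤ c)
    (x : Fin n → X) (y : Fin n → Fin c)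
    (H : Set (X → Fin c → ℝ)) (hHcount : H.Countable) (hHne : H.Nonempty)
    (hbdd₁ : ∀ g : Fin n → ℝ,
      BddAbove (Set.range fun h : H => ∑ i, g i * (h : X → Fin c → ℝ) (x i) (y i)))
    (hbdd₂ : ∀ g : Fin n × Fin c → ℝ,
      BddAbove (Set.range fun h : H => ∑ i, ∑ j, g (i, j) * (h : X → Fin c → ℝ) (x i) j))
    (hint₁ : Integrable
      (fun g : Fin n → ℝ => ⨆ h : H, ∑ i, g i * (h : X → Fin c → ℝ) (x i) (y i))
      (Measure.pi fun _ : Fin n => gaussianReal 0 1))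
    (hint₂ : Integrable
      (fun g : Fin n × Fin c → ℝ => ⨆ h : H, ∑ i, ∑ j, g (i, j) * (h : X → Fin c → ℝ) (x i) j)
      (Measure.pi fun _ : Fin n × Fin c => gaussianReal 0 1)) :
    ((∫ g : Fin n → ℝ, (⨆ h : H, ∑ i, g i * (h : X → Fin c → ℝ) (x i) (y i))
        ∂(Measure.pi fun _ : Fin n => gaussianReal 0 1)) ≤
      ∫ g : Fin n × Fin c → ℝ, (⨆ h : H, ∑ i, ∑ j, g (i, j) * (h : X → Fin c → ℝ) (x i) j)
        ∂(Measure.pi fun _ : Fin n × Fin c => gaussianReal 0 1)) ∧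
    ((∫ g : Fin n → ℝ, (⨆ h : H, (1 / (n : ℝ)) * ∑ i, g i * (h : X → Fin c → ℝ) (x i) (y i))
        ∂(Measure.pi fun _ : Fin n => gaussianReal 0 1)) ≤
      (1 / (n : ℝ)) *
        ∫ g : Fin n × Fin c → ℝ, (⨆ h : H, ∑ i, ∑ j, g (i, j) * (h : X → Fin c → ℝ) (x i) j)
          ∂(Measure.pi fun _ : Fin n × Fin c => gaussianReal 0 1)) := by
  have hle {r : ℝ} := gaussian_complexity_multiclass_le_general x y hHne hbdd₂ hint₁ hint₂ (r := r)
  exact ⟨by simpa only [one_mul] using hle zero_le_one, hle (by positivity)⟩
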